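/- Let N_b ≥ 1 and N_t ≥ 2 be integers and let S be the UF-4BL array with parameters N_b, N_t. Then its weight function satisfies w_S(1) = 1, w_S(2) = 1, w_S(3) = 2, and w_S(4) = 4N_b − 3. -/

import Mathlib

/-! The sub-arrays of the UF-4BL array occur in increasing order. With `T = (4 Nb + 7) Nt`, they are
`{0, 3}`, a step-4 run from `7`, `{4Nb+8, 4Nb+9}`, a step-4 run from `4Nb+15`, the transfer layer
(step `4Nb+7 > 4`), a step-4 run from `T+4Nb+19`, `{T+8Nb+18, T+8Nb+20}`, and a step-4 run from
`T+8Nb+25`. The gaps between consecutive sub-arrays are `4, 5, 6, 8, 7, 3, 5`, so a difference of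
at most `4` arises only inside a sub-array, from `3` to `7`, or from `T+8Nb+15` to `T+8Nb+18`.
The transfer layer contributes nothing: its spacing and its distance to the neighbours exceed `4`.

`weight_eq_card` rewrites `w(n)` as the number of `x` with `x, x + n` both in the array, and
`mem_UF4BL` describes the array by inequalities and congruences. The left endpoints of the
pairs can then be listed explicitly; for `n = 4` they form four step-4 runs of sizes `Nb`,
`Nb-1`, `Nb-1`, `Nb-1`. -/

/-- Weight function: number of sensor pairs with difference `n`. -/
def weight (S : Finset ℤ) (n : ℤ) : ℕ :=
  ((S ×ˢ S).filter fun p => p.1 - p.2 = n).card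

/-- The uniform linear array with initial position `I`, interspace `s` and `N` sensors. -/
def ULA (I s : ℤ) (N : ℕ) : Finset ℤ :=
  (Finset.range N).image fun k : ℕ => I + (k : ℤ) * s

/-- The UF-4BL sparse array with parameters `Nb` (base-layer sub-ULA size) and
`Nt` (transfer-layer size). -/
def UF4BL (Nb Nt : ℕ) : Finset ℤ :=
  ULA 0 3 2 ∪
  ULA 7 4 Nb ∪
  ULA (4 * (Nb : ℤ) + 8) 1 2 ∪
  ULA (4 * (Nb : ℤ) + 15) 4 Nb ∪
  ULA (8 * (Nb : ℤ) + 19) (4 * (Nb : ℤ) + 7) Nt ∪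
  ULA (4 * (Nb : ℤ) * Nt + 7 * Nt + 4 * Nb + 19) 4 Nb ∪
  ULA (4 * (Nb : ℤ) * Nt + 7 * Nt + 8 * Nb + 18) 2 2 ∪
  ULA (4 * (Nb : ℤ) * Nt + 7 * Nt + 8 * Nb + 25) 4 Nb

lemma weight_eq_card (S : Finset ℤ) (n : ℤ) (L : Finset ℤ)
    (h : ∀ x, (x ∈ S ∧ x + n ∈ S) ↔ x ∈ L) : weight S n = L.card := by
  unfold weight
  symm
  refine Finset.card_bij (fun x _ => (x + n, x)) ?_ ?_ ?_
  · intro x hx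
    have := (h x).2 hx
    simp [this]
  · intro x _ y _ hxy
    exact (Prod.ext_iff.1 hxy).2
  · rintro ⟨p, q⟩ hpq
    simp only [Finset.mem_filter, Finset.mem_product] at hpq
    obtain ⟨⟨hp, hq⟩, hd⟩ := hpq
    have e : q + n = p := by omega
    exact ⟨q, (h q).1 ⟨hq, e ▸ hp⟩, by simp [e]⟩

lemma mem_ULA {I s : ℤ} {N : ℕ} {x : ℤ} :
    x ∈ ULA I s N ↔ ∃ k : ℕ, k < N ∧ I + (k : ℤ) * s = x := by
  simp [ULA]

lemma mem_ULA_two {I s x : ℤ} : x ∈ ULA I s 2 ↔ x = I ∨ x = I + s := by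
  rw [mem_ULA]
  constructor
  · rintro ⟨k, hk, rfl⟩
    interval_cases k <;> simp
  · rintro (rfl | rfl)
    · exact ⟨0, by simp⟩
    · exact ⟨1, by simp⟩

lemma mem_ULA_four {I : ℤ} {N : ℕ} {x : ℤ} :
    x ∈ ULA I 4 N ↔ I ≤ x ∧ x < I + 4 * N ∧ (x - I) % 4 = 0 := by
  rw [mem_ULA]
  constructor
  · rintro ⟨k, hk, rfl⟩
    omega
  · rintro ⟨h1, h2, h3⟩
    exact ⟨((x - I) / 4).toNat, by omega, by omega⟩

lemma card_ULA_four (I : ℤ) (N : ℕ) : (ULA I 4 N).card = N := by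
  unfold ULA
  rw [Finset.card_image_of_injective, Finset.card_range]
  intro a b h
  simp only at h
  omega

/-- Membership in the array in linear form. The product `(4 Nb + 7) Nt` is hidden in `T` and the
transfer layer in a predicate `E`, of which only the range and the minimal spacing are recorded. -/
lemma mem_UF4BL (Nb Nt : ℕ) (ht : 2 ≤ Nt) :
    ∃ (T : ℤ) (E : ℤ → Prop),
      8 * Nb + 14 ≤ T ∧
      (∀ x, E x → 8 * Nb + 19 ≤ x ∧ x ≤ T + 4 * Nb + 12) ∧
      (∀ x y, E x → E y → x < y → x + (4 * Nb + 7) ≤ y) ∧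
      ∀ x, x ∈ UF4BL Nb Nt ↔
        (x = 0 ∨ x = 3) ∨ (7 ≤ x ∧ x < 7 + 4 * Nb ∧ (x - 7) % 4 = 0) ∨
        (x = 4 * Nb + 8 ∨ x = 4 * Nb + 9) ∨
        (4 * Nb + 15 ≤ x ∧ x < 8 * Nb + 15 ∧ (x - 15) % 4 = 0) ∨
        E x ∨
        (T + 4 * Nb + 19 ≤ x ∧ x < T + 8 * Nb + 19 ∧ (x - T - 19) % 4 = 0) ∨
        (x = T + 8 * Nb + 18 ∨ x = T + 8 * Nb + 20) ∨
        (T + 8 * Nb + 25 ≤ x ∧ x < T + 12 * Nb + 25 ∧ (x - T - 25) % 4 = 0) := by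
  refine ⟨4 * (Nb : ℤ) * Nt + 7 * Nt,
    fun x => x ∈ ULA (8 * (Nb : ℤ) + 19) (4 * (Nb : ℤ) + 7) Nt, ?_, ?_, ?_, ?_⟩
  · have : (2 : ℤ) ≤ Nt := by exact_mod_cast ht
    nlinarith
  · intro x hx
    obtain ⟨k, hk, rfl⟩ := mem_ULA.1 hx
    have : (k : ℤ) + 1 ≤ Nt := by exact_mod_cast hk
    constructor
    · have : 0 ≤ (k : ℤ) * (4 * (Nb : ℤ) + 7) := by positivity
      linarith
    · nlinarith
  · intro x y hx hy hxy
    obtain ⟨k, -, rfl⟩ := mem_ULA.1 hx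
    obtain ⟨l, -, rfl⟩ := mem_ULA.1 hy
    have hp : (0 : ℤ) < 4 * (Nb : ℤ) + 7 := by positivity
    have h1 : (k : ℤ) < l := lt_of_mul_lt_mul_right (by linarith) hp.le
    have h2 : (k : ℤ) + 1 ≤ l := h1
    nlinarith
  · intro x
    simp only [UF4BL, Finset.mem_union, mem_ULA_two, mem_ULA_four, or_assoc]
    generalize 4 * (Nb : ℤ) * Nt + 7 * Nt = T
    generalize (x ∈ ULA (8 * (Nb : ℤ) + 19) (4 * (Nb : ℤ) + 7) Nt) = P
    by_cases hP : P
    · simp [hP]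
    · simp only [hP, false_or]
      omega

/-- The weight function of the UF-4BL array satisfies
`w(1) = 1`, `w(2) = 1`, `w(3) = 2`, `w(4) = 4·Nb - 3`. -/
theorem uf4bl_weights (Nb Nt : ℕ) (hb : 1 ≤ Nb) (ht : 2 ≤ Nt) :
    weight (UF4BL Nb Nt) 1 = 1 ∧
    weight (UF4BL Nb Nt) 2 = 1 ∧
    weight (UF4BL Nb Nt) 3 = 2 ∧
    weight (UF4BL Nb Nt) 4 = 4 * Nb - 3 := by
  obtain ⟨T, E, hT, hE, hgap, hS⟩ := mem_UF4BL Nb Nt ht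
  refine ⟨?_, ?_, ?_, ?_⟩
  · rw [weight_eq_card _ 1 {4 * (Nb : ℤ) + 8}, Finset.card_singleton]
    intro x
    have h1 := hE x
    have h2 := hE (x + 1)
    have h3 := hgap x (x + 1)
    rw [hS, hS, Finset.mem_singleton]
    by_cases e1 : E x <;> by_cases e2 : E (x + 1) <;>
      simp only [e1, e2, forall_const, true_or, or_true, false_or] at h1 h2 h3 ⊢ <;> omega
  · rw [weight_eq_card _ 2 {T + 8 * (Nb : ℤ) + 18}, Finset.card_singleton]
    intro x
    have h1 := hE x
    have h2 := hE (x + 2)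
    have h3 := hgap x (x + 2)
    rw [hS, hS, Finset.mem_singleton]
    by_cases e1 : E x <;> by_cases e2 : E (x + 2) <;>
      simp only [e1, e2, forall_const, true_or, or_true, false_or] at h1 h2 h3 ⊢ <;> omega
  · rw [weight_eq_card _ 3 {0, T + 8 * (Nb : ℤ) + 15}, Finset.card_pair (by omega)]
    intro x
    have h1 := hE x
    have h2 := hE (x + 3)
    have h3 := hgap x (x + 3)
    rw [hS, hS, Finset.mem_insert, Finset.mem_singleton]
    by_cases e1 : E x <;> by_cases e2 : E (x + 3) <;>
      simp only [e1, e2, forall_const, true_or, or_true, false_or] at h1 h2 h3 ⊢ <;> omega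
  · -- The pair `(3, 7)` extends the first run to the left, hence its size `Nb`, not `Nb - 1`.
    rw [weight_eq_card _ 4 (ULA 3 4 Nb ∪ (ULA (4 * (Nb : ℤ) + 15) 4 (Nb - 1) ∪
      (ULA (T + 4 * (Nb : ℤ) + 19) 4 (Nb - 1) ∪ ULA (T + 8 * (Nb : ℤ) + 25) 4 (Nb - 1))))]
    · rw [Finset.card_union_of_disjoint, Finset.card_union_of_disjoint,
        Finset.card_union_of_disjoint]
      · simp only [card_ULA_four]
        omega
      all_goals
        rw [Finset.disjoint_left]
        intro x
        simp only [Finset.mem_union, mem_ULA_four]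
        omega
    · intro x
      have h1 := hE x
      have h2 := hE (x + 4)
      have h3 := hgap x (x + 4)
      rw [hS, hS]
      simp only [Finset.mem_union, mem_ULA_four]
      by_cases e1 : E x <;> by_cases e2 : E (x + 4) <;>
        simp only [e1, e2, forall_const, true_or, or_true, false_or] at h1 h2 h3 ⊢ <;> omega
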